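/- (Poincaré-type inequality) Let Ω ⊂ ℝⁿ be a bounded open set with interaction domain Ω_I of positive measure, Ω̃ = Ω ∪ Ω_I, and let V_c(Ω̃) = {u ∈ V(Ω̃) : u = 0 a.e. on Ω_I}, where |||·||| is the nonlocal energy seminorm defined by γ as above. Suppose the embedding H^{β(·)}(Ω̃) ↪ L²(Ω̃) is compact and |||u||| = 0 with u|_{Ω_I} = 0 implies u = 0. Then there exists C > 0 such that ‖u‖²_{L²(Ω̃)} ≤ C |||u|||² for all u ∈ V_c(Ω̃). -/

import Mathlib

open MeasureTheory Set
open scoped ENNReal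
noncomputable section

abbrev Euc (n : ℕ) := EuclideanSpace ℝ (Fin n)

/-- Quadratic form ξ · A · ξ. -/
def quadForm (n : ℕ) (A : Matrix (Fin n) (Fin n) ℝ) (ξ : Euc n) : ℝ :=
  ∑ i, ∑ j, A i j * ξ i * ξ j

/-- The kernel γ(t,x,y) = ((y−x)·a(t,x,y)·(y−x))/|y−x|^{n+2β(x)+2} 1_{B_ε(x)}(y). -/
def gammaKer (n : ℕ) (β : Euc n → ℝ) (ε : ℝ)
    (a : ℝ → Euc n → Euc n → Matrix (Fin n) (Fin n) ℝ) (t : ℝ) (x y : Euc n) : ℝ :=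
  (Metric.closedBall x ε).indicator
    (fun y => quadForm n (a t x y) (y - x) / dist y x ^ ((n : ℝ) + 2 * β x + 2)) y

/-- The nonlocal energy seminorm squared |||u|||². -/
def energySq (n : ℕ) (Ω : Set (Euc n)) (β : Euc n → ℝ) (ε : ℝ)
    (a : ℝ → Euc n → Euc n → Matrix (Fin n) (Fin n) ℝ) (t : ℝ) (u : Euc n → ℝ) : ℝ≥0∞ :=
  (1 / 2 : ℝ≥0∞) * ∫⁻ x in Ω, ∫⁻ y in Ω,
    ENNReal.ofReal ((u y - u x) ^ 2 * gammaKer n β ε a t x y)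

/-- Variable-order Gagliardo seminorm squared. -/
def gagVarSq (n : ℕ) (Ω : Set (Euc n)) (p : Euc n → ℝ) (u : Euc n → ℝ) : ℝ≥0∞ :=
  ∫⁻ x in Ω, ∫⁻ y in Ω,
    ENNReal.ofReal ((u y - u x) ^ 2 / dist y x ^ ((n : ℝ) + 2 * p x))

/-- Squared L² norm. -/
def l2Sq (n : ℕ) (Ω : Set (Euc n)) (u : Euc n → ℝ) : ℝ≥0∞ :=
  ∫⁻ x in Ω, ENNReal.ofReal ((u x) ^ 2)

/-- Sobolev norm. -/
def sobNorm (n : ℕ) (Ω : Set (Euc n)) (p : Euc n → ℝ) (u : Euc n → ℝ) : ℝ≥0∞ :=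
  l2Sq n Ω u ^ (1/2 : ℝ) + gagVarSq n Ω p u ^ (1/2 : ℝ)

/-- Compactness of the embedding into L²(Ω). -/
def CompactEmbL2 (n : ℕ) (Ω : Set (Euc n)) (N : (Euc n → ℝ) → ℝ≥0∞) : Prop :=
  ∀ (u : ℕ → Euc n → ℝ) (M : ℝ≥0∞), (∀ k, Measurable (u k)) → M ≠ ⊤ →
    (∀ k, N (u k) ≤ M) →
    ∃ (φ : ℕ → ℕ) (v : Euc n → ℝ), StrictMono φ ∧
      Filter.Tendsto (fun k => l2Sq n Ω (fun x => u (φ k) x - v x))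
        Filter.atTop (nhds 0)

/-!
The inequality spreads along interactions. If it holds on a set `G` and every point of `E`
interacts with at least a fixed mass `δ > 0` of points of `G`, then averaging
`|u x| ^ 2 ≤ 2 |u y - u x| ^ 2 + 2 |u y| ^ 2` over those `y` gives it on `E`. It holds trivially on
`Ω_I`. Cover `Ω` by finitely many balls of diameter `ε`, and let `G` be the union of `Ω_I` and the
balls on which the inequality holds. Almost no point of a remaining ball can interact with `G`, so
`G` and its complement do not interact. The indicator of the complement of `G` therefore has zero
energy and vanishes on `Ω_I`, so it vanishes almost everywhere and `G` has full measure.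
-/

section InteractionRelation

variable {X F : Type*} [MeasurableSpace X] [SeminormedAddCommGroup F]
  {μ : Measure X} {r : SetRel X X} {p : ℝ} {u : X → F} {I E G : Set X}

/-- The `p`-energy of `u` over the pairs `(x, y)` related by `r`, without any weight. It is the part
of a nonlocal energy that survives when the kernel is replaced by a positive lower bound on its
support `r`. -/
def pairEnergy (r : SetRel X X) (μ : Measure X) (p : ℝ) (u : X → F) : ℝ≥0∞ :=
  ∫⁻ x, ∫⁻ y in Prod.mk x ⁻¹' r, ‖u y - u x‖ₑ ^ p ∂μ ∂μ

/-- The Poincaré inequality on the set `E` for functions vanishing almost everywhere on `I`: the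
energy over all of `X` controls the `p`-th power of the `L^p` norm over `E`. -/
def PoincareOn (F : Type*) [SeminormedAddCommGroup F] (p : ℝ) (r : SetRel X X) (μ : Measure X)
    (I E : Set X) : Prop :=
  ∃ C : ℝ≥0∞, C ≠ ∞ ∧ ∀ u : X → F, AEStronglyMeasurable u μ →
    (∀ᵐ x ∂μ.restrict I, u x = 0) → ∫⁻ x in E, ‖u x‖ₑ ^ p ∂μ ≤ C * pairEnergy r μ p u

/-- The set `G` is closed under the interactions in `r` up to null sets: almost every point that
interacts with a non-null part of `G` lies in `G`. -/
def IsInteractionClosed (r : SetRel X X) (μ : Measure X) (G : Set X) : Prop :=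
  ∀ᵐ x ∂μ, ∀ᵐ y ∂μ, (x, y) ∈ r → y ∈ G → x ∈ G

lemma isInteractionClosed_of_ae_measure_inter_eq_zero
    (h : ∀ᵐ x ∂μ, x ∉ G → μ (G ∩ Prod.mk x ⁻¹' r) = 0) : IsInteractionClosed r μ G := by
  filter_upwards [h] with x hx
  by_cases hxG : x ∈ G
  · exact .of_forall fun _ _ _ => hxG
  · filter_upwards [measure_eq_zero_iff_ae_notMem.1 (hx hxG)] with y hy hxy hyG
    exact absurd ⟨hyG, hxy⟩ hy

lemma IsInteractionClosed.ae_mem_iff [SFinite μ] [r.IsSymm] (hr : MeasurableSet r)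
    (hG : MeasurableSet G) (h : IsInteractionClosed r μ G) :
    ∀ᵐ x ∂μ, ∀ᵐ y ∂μ, (x, y) ∈ r → (y ∈ G ↔ x ∈ G) := by
  have hmeas : MeasurableSet {q : X × X | q ∈ r → q.2 ∈ G → q.1 ∈ G} :=
    hr.imp ((measurable_snd hG).imp (measurable_fst hG))
  have hswap := (Measure.ae_ae_comm (p := fun x y => (x, y) ∈ r → y ∈ G → x ∈ G) hmeas).1 h
  filter_upwards [h, hswap] with x hx hx'
  filter_upwards [hx, hx'] with y hy hy' hxy
  exact ⟨hy hxy, hy' (r.symm hxy)⟩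

lemma poincareOn_self (hp : 0 < p) : PoincareOn F p r μ I I := by
  refine ⟨0, by simp, fun u _ hu => ?_⟩
  rw [zero_mul, nonpos_iff_eq_zero, ← lintegral_zero (μ := μ.restrict I)]
  refine lintegral_congr_ae ?_
  filter_upwards [hu] with x hx
  rw [hx, ← ofReal_norm, norm_zero, ENNReal.ofReal_zero, ENNReal.zero_rpow_of_pos hp]

lemma PoincareOn.union (hE : PoincareOn F p r μ I E) (hG : PoincareOn F p r μ I G) :
    PoincareOn F p r μ I (E ∪ G) := by
  obtain ⟨C, hC, hE⟩ := hE
  obtain ⟨C', hC', hG⟩ := hG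
  refine ⟨C + C', by finiteness, fun u hu h0 => ?_⟩
  rw [add_mul]
  exact (lintegral_union_le _ _ _).trans (add_le_add (hE u hu h0) (hG u hu h0))

lemma PoincareOn.biUnion {ι : Type*} {s : Set ι} (hs : s.Finite) {E : ι → Set X}
    (hE : ∀ i ∈ s, PoincareOn F p r μ I (E i)) : PoincareOn F p r μ I (⋃ i ∈ s, E i) := by
  induction s, hs using Set.Finite.induction_on with
  | empty => exact ⟨0, by simp, by simp⟩
  | insert _ _ ih =>
    rw [biUnion_insert]
    exact (hE _ (mem_insert _ _)).union (ih fun i hi => hE i (mem_insert_of_mem _ hi))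

lemma measure_mul_enorm_rpow_le (hp : 0 ≤ p) (hu : AEStronglyMeasurable u μ) (c : F) :
    μ univ * ‖c‖ₑ ^ p ≤
      ENNReal.LpAddConst (ENNReal.ofReal p)⁻¹ *
        (∫⁻ y, ‖u y - c‖ₑ ^ p ∂μ + ∫⁻ y, ‖u y‖ₑ ^ p ∂μ) := by
  have henorm (y : X) : ‖c‖ₑ ≤ ‖u y - c‖ₑ + ‖u y‖ₑ := by
    simpa [add_comm] using enorm_sub_le (a := u y) (b := u y - c)
  calc μ univ * ‖c‖ₑ ^ p = ∫⁻ _, ‖c‖ₑ ^ p ∂μ := by rw [lintegral_const, mul_comm]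
    _ ≤ ∫⁻ y, ENNReal.LpAddConst (ENNReal.ofReal p)⁻¹ *
          (‖u y - c‖ₑ ^ p + ‖u y‖ₑ ^ p) ∂μ :=
        lintegral_mono fun y => (ENNReal.rpow_le_rpow (henorm y) hp).trans
          (ENNReal.rpow_add_le_mul_rpow_add_rpow' _ _ hp)
    _ = ENNReal.LpAddConst (ENNReal.ofReal p)⁻¹ *
          (∫⁻ y, ‖u y - c‖ₑ ^ p ∂μ + ∫⁻ y, ‖u y‖ₑ ^ p ∂μ) := by
        rw [lintegral_const_mul' _ _ (ENNReal.LpAddConst_lt_top _).ne,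
          lintegral_add_right' _ (hu.enorm.pow_const p)]

/-- Each `x ∈ E` is compared with all the points of `G` it interacts with. -/
lemma PoincareOn.of_le_measure_inter (hp : 0 ≤ p) (hG : PoincareOn F p r μ I G)
    (hE : MeasurableSet E) (hEfin : μ E ≠ ∞) {δ : ℝ≥0∞} (hδ : δ ≠ 0) (hδ' : δ ≠ ∞)
    (hδE : ∀ x ∈ E, δ ≤ μ (G ∩ Prod.mk x ⁻¹' r)) : PoincareOn F p r μ I E := by
  obtain ⟨C, hC, hG⟩ := hG
  set L := ENNReal.LpAddConst (ENNReal.ofReal p)⁻¹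
  have hL : L ≠ ∞ := (ENNReal.LpAddConst_lt_top _).ne
  refine ⟨δ⁻¹ * (L * (1 + μ E * C)), by finiteness, fun u hu h0 => ?_⟩
  have hpoint (x : X) (hx : x ∈ E) : δ * ‖u x‖ₑ ^ p ≤
      L * (∫⁻ y in Prod.mk x ⁻¹' r, ‖u y - u x‖ₑ ^ p ∂μ + C * pairEnergy r μ p u) :=
    calc δ * ‖u x‖ₑ ^ p
        ≤ μ.restrict (G ∩ Prod.mk x ⁻¹' r) univ * ‖u x‖ₑ ^ p := by
          rw [Measure.restrict_apply_univ]; gcongr; exact hδE x hx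
      _ ≤ L * (∫⁻ y in G ∩ Prod.mk x ⁻¹' r, ‖u y - u x‖ₑ ^ p ∂μ
            + ∫⁻ y in G ∩ Prod.mk x ⁻¹' r, ‖u y‖ₑ ^ p ∂μ) :=
          measure_mul_enorm_rpow_le hp hu.restrict (u x)
      _ ≤ L * (∫⁻ y in Prod.mk x ⁻¹' r, ‖u y - u x‖ₑ ^ p ∂μ + C * pairEnergy r μ p u) := by
          gcongr
          · exact inter_subset_right
          · exact (lintegral_mono_set inter_subset_left).trans (hG u hu h0)
  rw [mul_assoc, ← ENNReal.mul_le_iff_le_inv hδ hδ', ← lintegral_const_mul' _ _ hδ']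
  calc ∫⁻ x in E, δ * ‖u x‖ₑ ^ p ∂μ
      ≤ ∫⁻ x in E, L * (∫⁻ y in Prod.mk x ⁻¹' r, ‖u y - u x‖ₑ ^ p ∂μ
          + C * pairEnergy r μ p u) ∂μ := setLIntegral_mono' hE hpoint
    _ = L * (∫⁻ x in E, ∫⁻ y in Prod.mk x ⁻¹' r, ‖u y - u x‖ₑ ^ p ∂μ ∂μ
          + C * pairEnergy r μ p u * μ E) := by
        rw [lintegral_const_mul' _ _ hL, lintegral_add_right _ measurable_const, setLIntegral_const]
    _ ≤ L * (pairEnergy r μ p u + C * pairEnergy r μ p u * μ E) := by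
        gcongr; exact setLIntegral_le_lintegral _ _
    _ = L * (1 + μ E * C) * pairEnergy r μ p u := by ring

lemma exists_frequently_le_of_frequently_ne_zero {f : X → ℝ≥0∞} (hf : ∃ᵐ x ∂μ, f x ≠ 0) :
    ∃ δ : ℝ≥0∞, δ ≠ 0 ∧ δ ≠ ∞ ∧ ∃ᵐ x ∂μ, δ ≤ f x := by
  contrapose! hf
  have hlt (k : ℕ) : ∀ᵐ x ∂μ, f x < ((k : ℝ≥0∞) + 1)⁻¹ := by
    simpa using hf ((k : ℝ≥0∞) + 1)⁻¹ (by simp) (by simp)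
  filter_upwards [ae_all_iff.2 hlt] with x hx
  by_contra hx0
  obtain ⟨k, hk⟩ := ENNReal.exists_inv_nat_lt hx0
  exact (hk.trans (hx k)).not_ge (ENNReal.inv_le_inv.2 le_self_add)

/-- The inequality passes from `G` to a non-null part of `E`, and from there to all of `E` because
any two points of `E` interact. -/
lemma PoincareOn.of_frequently_measure_inter_ne_zero [SFinite μ] (hp : 0 ≤ p)
    (hr : MeasurableSet r) (hG : PoincareOn F p r μ I G) (hGm : MeasurableSet G)
    (hE : MeasurableSet E) (hEfin : μ E ≠ ∞) (hEr : E ×ˢ E ⊆ r)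
    (h : ∃ᵐ x ∂μ.restrict E, μ (G ∩ Prod.mk x ⁻¹' r) ≠ 0) : PoincareOn F p r μ I E := by
  obtain ⟨δ, hδ, hδ', hfreq⟩ := exists_frequently_le_of_frequently_ne_zero h
  have hm : Measurable fun x => μ (G ∩ Prod.mk x ⁻¹' r) :=
    measurable_measure_prodMk_left ((measurable_snd hGm).inter hr)
  set A := E ∩ {x | δ ≤ μ (G ∩ Prod.mk x ⁻¹' r)}
  have hAm : MeasurableSet A := hE.inter (measurableSet_le measurable_const hm)
  have hAfin : μ A ≠ ∞ := measure_ne_top_of_subset inter_subset_left hEfin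
  have hA0 : μ A ≠ 0 := by
    rw [frequently_ae_iff, Measure.restrict_apply' hE, inter_comm] at hfreq
    exact hfreq
  have hA : PoincareOn F p r μ I A :=
    hG.of_le_measure_inter hp hAm hAfin hδ hδ' fun x hx => hx.2
  exact hA.of_le_measure_inter hp hE hEfin hA0 hAfin fun x hx =>
    measure_mono fun y hy => ⟨hy, hEr ⟨hx, hy.1⟩⟩

variable (F) in
lemma exists_isInteractionClosed_poincareOn [SFinite μ] (hp : 0 < p) (hr : MeasurableSet r)
    (hI : MeasurableSet I) {ι : Type*} [Finite ι] {E : ι → Set X} (hE : ∀ i, MeasurableSet (E i))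
    (hEfin : ∀ i, μ (E i) ≠ ∞) (hEr : ∀ i, E i ×ˢ E i ⊆ r)
    (hcover : ∀ᵐ x ∂μ, x ∈ I ∪ ⋃ i, E i) :
    ∃ G, MeasurableSet G ∧ I ⊆ G ∧ PoincareOn F p r μ I G ∧ IsInteractionClosed r μ G := by
  set s := {i | PoincareOn F p r μ I (E i)}
  set G := I ∪ ⋃ i ∈ s, E i
  have hGm : MeasurableSet G := hI.union (s.toFinite.measurableSet_biUnion fun i _ => hE i)
  have hG : PoincareOn F p r μ I G := (poincareOn_self hp).union (.biUnion s.toFinite fun _ h => h)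
  have hsep (i : ι) : ∀ᵐ x ∂μ, x ∈ E i → i ∉ s → μ (G ∩ Prod.mk x ⁻¹' r) = 0 := by
    by_cases his : i ∈ s
    · exact .of_forall fun _ _ h => absurd his h
    · have hnull : ∀ᵐ x ∂μ.restrict (E i), μ (G ∩ Prod.mk x ⁻¹' r) = 0 := by
        contrapose! his
        exact hG.of_frequently_measure_inter_ne_zero hp.le hr hGm (hE i) (hEfin i) (hEr i) his
      filter_upwards [(ae_restrict_iff' (hE i)).1 hnull] with x hx hxE _ using hx hxE
  refine ⟨G, hGm, subset_union_left, hG, isInteractionClosed_of_ae_measure_inter_eq_zero ?_⟩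
  filter_upwards [hcover, ae_all_iff.2 hsep] with x hxcover hxsep hxG
  obtain ⟨i, hxi⟩ := mem_iUnion.1 (hxcover.resolve_left fun h => hxG (.inl h))
  exact hxsep i hxi fun his => hxG (.inr (mem_biUnion his hxi))

end InteractionRelation

section DistLE

variable {X : Type*} [PseudoMetricSpace X]

/-- The relation of being at distance at most `ε`. The order of the two points in `dist` makes the
section of the relation at `x` definitionally equal to `Metric.closedBall x ε`. -/
def distLE (X : Type*) [PseudoMetricSpace X] (ε : ℝ) : SetRel X X := {q | dist q.2 q.1 ≤ ε}

instance (ε : ℝ) : (distLE X ε).IsSymm where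
  symm x y h := by rwa [distLE, mem_ofPred, dist_comm]

lemma isClosed_distLE (ε : ℝ) : IsClosed (distLE X ε) :=
  isClosed_le (continuous_snd.dist continuous_fst) continuous_const

lemma ball_prod_ball_subset_distLE (z : X) (ε : ℝ) :
    Metric.ball z (ε / 2) ×ˢ Metric.ball z (ε / 2) ⊆ distLE X ε := by
  rintro ⟨x, y⟩ ⟨hx, hy⟩
  rw [Metric.mem_ball] at hx hy
  change dist y x ≤ ε
  linarith [dist_triangle_right y x z]

lemma exists_isInteractionClosed_poincareOn_of_isBounded (F : Type*) [SeminormedAddCommGroup F]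
    [ProperSpace X] [MeasurableSpace X] [OpensMeasurableSpace X] {μ : Measure X}
    [IsLocallyFiniteMeasure μ] {p : ℝ} (hp : 0 < p) {ε : ℝ} (hε : 0 < ε) {I B : Set X}
    (hI : MeasurableSet I) (hB : Bornology.IsBounded B) (hcover : ∀ᵐ x ∂μ, x ∈ I ∪ B) :
    ∃ G, MeasurableSet G ∧ I ⊆ G ∧ PoincareOn F p (distLE X ε) μ I G ∧
      IsInteractionClosed (distLE X ε) μ G := by
  obtain ⟨T, hT, hBT⟩ := Metric.totallyBounded_iff.1
    (hB.isCompact_closure.totallyBounded.subset subset_closure) (ε / 2) (half_pos hε)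
  have := hT.to_subtype
  refine exists_isInteractionClosed_poincareOn (E := fun z : T => Metric.ball z.1 (ε / 2)) F hp
    (isClosed_distLE ε).measurableSet hI (fun _ => measurableSet_ball)
    (fun _ => measure_ball_lt_top.ne) (fun z => ball_prod_ball_subset_distLE z.1 ε) ?_
  filter_upwards [hcover] with x hx
  rw [← biUnion_eq_iUnion T fun z _ => Metric.ball z (ε / 2)]
  exact hx.imp id (@hBT x)

end DistLE

section NonlocalEnergy

variable {n : ℕ} {S : Set (Euc n)} {β : Euc n → ℝ} {ε t : ℝ}
  {a : ℝ → Euc n → Euc n → Matrix (Fin n) (Fin n) ℝ} {u : Euc n → ℝ}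

lemma le_gammaKer {b alo : ℝ} {x y : Euc n} (hβ : 0 ≤ β x) (hb : β x ≤ b) (halo : 0 ≤ alo)
    (hell : alo * ‖y - x‖ ^ 2 ≤ quadForm n (a t x y) (y - x)) (hne : y ≠ x)
    (hy : y ∈ Metric.closedBall x ε) :
    alo / max 1 ε ^ ((n : ℝ) + 2 * b) ≤ gammaKer n β ε a t x y := by
  have hd : 0 < dist y x := dist_pos.2 hne
  have hdε : dist y x ≤ max 1 ε := (Metric.mem_closedBall.1 hy).trans (le_max_right _ _)
  have hpow : dist y x ^ ((n : ℝ) + 2 * β x) ≤ max 1 ε ^ ((n : ℝ) + 2 * b) :=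
    (Real.rpow_le_rpow hd.le hdε (by positivity)).trans
      (Real.rpow_le_rpow_of_exponent_le (le_max_left _ _) (by linarith))
  rw [gammaKer, indicator_of_mem hy]
  calc alo / max 1 ε ^ ((n : ℝ) + 2 * b) ≤ alo / dist y x ^ ((n : ℝ) + 2 * β x) := by gcongr
    _ = alo * ‖y - x‖ ^ 2 / dist y x ^ ((n : ℝ) + 2 * β x + 2) := by
        rw [← dist_eq_norm, Real.rpow_add hd _ 2, Real.rpow_two,
          mul_div_mul_right _ _ (by positivity)]
    _ ≤ quadForm n (a t x y) (y - x) / dist y x ^ ((n : ℝ) + 2 * β x + 2) := by gcongr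

lemma ofReal_sq_eq_enorm_rpow_two (s : ℝ) : ENNReal.ofReal (s ^ 2) = ‖s‖ₑ ^ (2 : ℝ) := by
  rw [ENNReal.rpow_two, ← enorm_pow, Real.enorm_of_nonneg (sq_nonneg s)]

lemma pairEnergy_le_mul_energySq {c : ℝ} (hc : 0 < c)
    (hγ : ∀ x, ∀ y ∈ Metric.closedBall x ε, y ≠ x → c ≤ gammaKer n β ε a t x y) :
    pairEnergy (distLE _ ε) (volume.restrict S) 2 u ≤
      ENNReal.ofReal c⁻¹ * 2 * energySq n S β ε a t u := by
  have hpoint (x y : Euc n) (hy : y ∈ Metric.closedBall x ε) : ‖u y - u x‖ₑ ^ (2 : ℝ) ≤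
      ENNReal.ofReal c⁻¹ * ENNReal.ofReal ((u y - u x) ^ 2 * gammaKer n β ε a t x y) := by
    rcases eq_or_ne y x with rfl | hne
    · simp
    rw [← ofReal_sq_eq_enorm_rpow_two, ← ENNReal.ofReal_mul (by positivity)]
    gcongr
    rw [inv_mul_eq_div, le_div_iff₀ hc]
    gcongr
    exact hγ x y hy hne
  rw [energySq, mul_assoc, ← mul_assoc 2, one_div, ENNReal.mul_inv_cancel (by simp) (by simp),
    one_mul, pairEnergy, ← lintegral_const_mul' _ _ ENNReal.ofReal_ne_top]
  refine lintegral_mono fun x => ?_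
  rw [← lintegral_const_mul' _ _ ENNReal.ofReal_ne_top]
  exact (setLIntegral_mono' Metric.isClosed_closedBall.measurableSet (hpoint x)).trans
    (setLIntegral_le_lintegral _ _)

lemma energySq_eq_zero
    (hu : ∀ᵐ x ∂volume.restrict S, ∀ᵐ y ∂volume.restrict S, (x, y) ∈ distLE _ ε → u y = u x) :
    energySq n S β ε a t u = 0 := by
  rw [energySq, mul_eq_zero, or_iff_right (by simp)]
  refine (lintegral_congr_ae ?_).trans lintegral_zero
  filter_upwards [hu] with x hx
  refine (lintegral_congr_ae ?_).trans lintegral_zero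
  filter_upwards [hx] with y hy
  by_cases hxy : (x, y) ∈ distLE _ ε
  · simp [hy hxy]
  · have hγ : gammaKer n β ε a t x y = 0 :=
      indicator_of_notMem (s := Metric.closedBall x ε) hxy _
    simp [hγ]

lemma IsInteractionClosed.energySq_indicator_compl {G : Set (Euc n)} (hGm : MeasurableSet G)
    (hG : IsInteractionClosed (distLE _ ε) (volume.restrict S) G) :
    energySq n S β ε a t (Gᶜ.indicator 1) = 0 := by
  refine energySq_eq_zero ?_
  filter_upwards [hG.ae_mem_iff (isClosed_distLE ε).measurableSet hGm] with x hx
  filter_upwards [hx] with y hy hxy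
  classical simp only [indicator_apply, mem_compl_iff, hy hxy, Pi.one_apply]

lemma IsInteractionClosed.ae_mem {I G : Set (Euc n)} (hI : MeasurableSet I)
    (hker : ∀ u : Euc n → ℝ, Measurable u → energySq n S β ε a t u = 0 →
      (∀ᵐ x ∂volume.restrict I, u x = 0) → ∀ᵐ x ∂volume.restrict S, u x = 0)
    (hGm : MeasurableSet G) (hIG : I ⊆ G)
    (hG : IsInteractionClosed (distLE _ ε) (volume.restrict S) G) :
    ∀ᵐ x ∂volume.restrict S, x ∈ G := by
  have hvanish : ∀ᵐ x ∂volume.restrict I, Gᶜ.indicator (1 : Euc n → ℝ) x = 0 := by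
    filter_upwards [ae_restrict_mem hI] with x hx using by simp [hIG hx]
  filter_upwards [hker _ (measurable_one.indicator hGm.compl)
    (hG.energySq_indicator_compl hGm) hvanish] with x hx
  simpa using hx

end NonlocalEnergy

theorem stmt_6_general (n : ℕ) (Ω ΩI : Set (Euc n))
    (hΩ : MeasurableSet Ω) (hbd : Bornology.IsBounded Ω) (hΩI : MeasurableSet ΩI)
    (β : Euc n → ℝ) (βhi : ℝ) (hβ : ∀ x, 0 ≤ β x ∧ β x ≤ βhi)
    (ε : ℝ) (hε : 0 < ε)
    (a : ℝ → Euc n → Euc n → Matrix (Fin n) (Fin n) ℝ) (alo : ℝ) (halo : 0 < alo) (t : ℝ)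
    (hell : ∀ x y (ξ : Euc n), alo * ‖ξ‖ ^ 2 ≤ quadForm n (a t x y) ξ)
    (hker : ∀ u : Euc n → ℝ, Measurable u →
      energySq n (Ω ∪ ΩI) β ε a t u = 0 →
      (∀ᵐ x ∂volume.restrict ΩI, u x = 0) →
      (∀ᵐ x ∂volume.restrict (Ω ∪ ΩI), u x = 0)) :
    ∃ C : ℝ≥0∞, 0 < C ∧ C ≠ ⊤ ∧
      ∀ u : Euc n → ℝ, Measurable u →
        (∀ᵐ x ∂volume.restrict ΩI, u x = 0) →
        l2Sq n (Ω ∪ ΩI) u ≤ C * energySq n (Ω ∪ ΩI) β ε a t u := by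
  have hcover : ∀ᵐ x ∂volume.restrict (Ω ∪ ΩI), x ∈ ΩI ∪ Ω :=
    union_comm Ω ΩI ▸ ae_restrict_mem (hΩ.union hΩI)
  obtain ⟨G, hGm, hΩIG, ⟨C, hC, hpoincare⟩, hG⟩ :=
    exists_isInteractionClosed_poincareOn_of_isBounded ℝ two_pos hε hΩI hbd hcover
  have hGfull := hG.ae_mem hΩI hker hGm hΩIG
  set c := alo / max 1 ε ^ ((n : ℝ) + 2 * βhi)
  refine ⟨C * (ENNReal.ofReal c⁻¹ * 2) + 1, by simp, by finiteness, fun u hu h0 => ?_⟩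
  have hΩI_restrict : (volume.restrict (Ω ∪ ΩI)).restrict ΩI = volume.restrict ΩI :=
    Measure.restrict_restrict_of_subset subset_union_right
  calc l2Sq n (Ω ∪ ΩI) u = ∫⁻ x in G, ‖u x‖ₑ ^ (2 : ℝ) ∂volume.restrict (Ω ∪ ΩI) := by
        simp only [Measure.restrict_eq_self_of_ae_mem hGfull, l2Sq, ofReal_sq_eq_enorm_rpow_two]
    _ ≤ C * pairEnergy (distLE _ ε) (volume.restrict (Ω ∪ ΩI)) 2 u :=
        hpoincare u hu.aestronglyMeasurable (by rwa [hΩI_restrict])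
    _ ≤ C * (ENNReal.ofReal c⁻¹ * 2 * energySq n (Ω ∪ ΩI) β ε a t u) := by
        gcongr
        exact pairEnergy_le_mul_energySq (by positivity) fun x y hy hne =>
          le_gammaKer (hβ x).1 (hβ x).2 halo.le (hell x y _) hne hy
    _ ≤ (C * (ENNReal.ofReal c⁻¹ * 2) + 1) * energySq n (Ω ∪ ΩI) β ε a t u := by
        rw [← mul_assoc]; gcongr; exact le_self_add

theorem stmt_6 (n : ℕ) (Ω ΩI : Set (Euc n))
    (hΩ : IsOpen Ω) (hbd : Bornology.IsBounded Ω) (hΩI : MeasurableSet ΩI)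
    (hΩIpos : 0 < volume ΩI)
    (β : Euc n → ℝ) (βlo βhi : ℝ) (hlo : 0 < βlo) (hhi : βhi < 1)
    (hβ : ∀ x, βlo ≤ β x ∧ β x ≤ βhi) (hβcont : Continuous β)
    (ε : ℝ) (hε : 0 < ε)
    (a : ℝ → Euc n → Euc n → Matrix (Fin n) (Fin n) ℝ)
    (alo ahi : ℝ) (halo : 0 < alo)
    (hsym : ∀ t x y, (a t x y).IsSymm)
    (hell : ∀ t x y (ξ : Euc n),
      alo * ‖ξ‖ ^ 2 ≤ quadForm n (a t x y) ξ ∧ quadForm n (a t x y) ξ ≤ ahi * ‖ξ‖ ^ 2)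
    (t : ℝ)
    (hcomp : CompactEmbL2 n (Ω ∪ ΩI) (sobNorm n (Ω ∪ ΩI) β))
    (hker : ∀ u : Euc n → ℝ, Measurable u →
      energySq n (Ω ∪ ΩI) β ε a t u = 0 →
      (∀ᵐ x ∂volume.restrict ΩI, u x = 0) →
      (∀ᵐ x ∂volume.restrict (Ω ∪ ΩI), u x = 0)) :
    ∃ C : ℝ≥0∞, 0 < C ∧ C ≠ ⊤ ∧
      ∀ u : Euc n → ℝ, Measurable u →
        l2Sq n (Ω ∪ ΩI) u ≠ ⊤ → energySq n (Ω ∪ ΩI) β ε a t u ≠ ⊤ →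
        (∀ᵐ x ∂volume.restrict ΩI, u x = 0) →
        l2Sq n (Ω ∪ ΩI) u ≤ C * energySq n (Ω ∪ ΩI) β ε a t u := by
  exact (stmt_6_general n Ω ΩI hΩ.measurableSet hbd hΩI β βhi
    (fun x => ⟨hlo.le.trans (hβ x).1, (hβ x).2⟩) ε hε a alo halo t
    (fun x y ξ => (hell t x y ξ).1) hker).imp
    fun _ ⟨hpos, hfin, hC⟩ => ⟨hpos, hfin, fun u hu _ _ => hC u hu⟩
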